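/- There is a constant α > 0 (one may take α = 2^{-32}) such that for every integer t ≥ 2 and every [n,k,d] code C with d − 1 ≥ (1 − 1/(10m))·n where m = 2^t, the Tanner pair (H^n_t, C²) is α^t-robust, where H^n_2 = G^n_{4,2} and H^n_t = G^{n^{2^{t-2}}}_{4,2} © H^n_{t-1} for t > 2; in particular C^{2^t} = TPC(H^n_t, C²). -/

import Mathlib

/-- Relative Hamming distance between two words indexed by a finite type. -/
noncomputable def relHammingDist {ι F : Type} [Fintype ι] [DecidableEq F] (x y : ι → F) : ℝ :=
  (hammingDist x y : ℝ) / (Fintype.card ι)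

/-- Relative Hamming distance from a word to (the nearest codeword of) a code. -/
noncomputable def distToCode {ι F : Type} [Fintype ι] [DecidableEq F] (C : Set (ι → F)) (r : ι → F) : ℝ :=
  sInf (relHammingDist r '' C)

/-- Minimum Hamming distance of a code. -/
noncomputable def minDist {ι F : Type} [Fintype ι] [DecidableEq F] (C : Set (ι → F)) : ℕ :=
  sInf {e | ∃ x ∈ C, ∃ y ∈ C, x ≠ y ∧ hammingDist x y = e}

/-- The `m`-fold tensor power `C^m` of a code `C ⊆ F^n`. -/
def tensorPow {F : Type} {n : ℕ} (C : Set (Fin n → F)) (m : ℕ) :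
    Set ((Fin m → Fin n) → F) :=
  {r | ∀ (b : Fin m) (x : Fin m → Fin n), (fun i => r (Function.update x b i)) ∈ C}

/-- The neighborhood map of one test of `G^{4,2}` over an abstract coordinate type `ι`:
a test of the 4-Product tester (a 3-dimensional slice, given by `(b₁,i₁)`) composed with
a test of the 3-Product tester (a further 2-dimensional slice, given by `(b₂,i₂)`). -/
def g42view {ι : Type} (p : (Fin 4 × ι) × (Fin 3 × ι)) (q : Fin 2 → ι) : Fin 4 → ι :=
  p.1.1.insertNth p.1.2 (p.2.1.insertNth p.2.2 q)

/-- Uncurrying equivalence for blocks of coordinates. -/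
def blockEquiv (n a b : ℕ) : (Fin a → Fin b → Fin n) ≃ (Fin (a * b) → Fin n) :=
  (Equiv.curry (Fin a) (Fin b) (Fin n)).symm.trans
    (Equiv.arrowCongr finProdFinEquiv (Equiv.refl (Fin n)))

/-- Transport along an equality of index sizes. -/
def reFin (n : ℕ) {a b : ℕ} (h : a = b) : (Fin a → Fin n) ≃ (Fin b → Fin n) :=
  Equiv.arrowCongr (finCongr h) (Equiv.refl (Fin n))

/-- The (right-vertex) index type of the recursively composed Tanner graph `H^n_t`
(with `t = s + 2`): `H^n_2 = G^n_{4,2}` and `H^n_t = G^{n^{2^{t-2}}}_{4,2} © H^n_{t-1}`. -/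
def Rty (n : ℕ) : ℕ → Type := fun s =>
  Nat.rec ((Fin 4 × Fin n) × (Fin 3 × Fin n))
    (fun s ih =>
      ((Fin 4 × (Fin (2 ^ (s + 1)) → Fin n)) × (Fin 3 × (Fin (2 ^ (s + 1)) → Fin n))) × ih) s

instance RtyFintype (n : ℕ) : ∀ s, Fintype (Rty n s) := fun s =>
  Nat.rec (motive := fun s => Fintype (Rty n s))
    (inferInstanceAs (Fintype ((Fin 4 × Fin n) × (Fin 3 × Fin n))))
    (fun s ih =>
      letI : Fintype (Rty n s) := ih
      inferInstanceAs (Fintype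
        ((((Fin 4 × (Fin (2 ^ (s + 1)) → Fin n)) × (Fin 3 × (Fin (2 ^ (s + 1)) → Fin n))) ×
          Rty n s)))) s

/-- The ordered adjacency lists of `H^n_t` (with `t = s + 2`): each test `j : Rty n s`
reads a 2-dimensional pattern of coordinates of `[n]^{2^t}` (identified with
`Fin (2^t) → Fin n`). -/
def ellH (n : ℕ) : ∀ s, Rty n s → (Fin 2 → Fin n) → (Fin (2 ^ (s + 2)) → Fin n) := fun s =>
  Nat.rec (motive := fun s => Rty n s → (Fin 2 → Fin n) → (Fin (2 ^ (s + 2)) → Fin n))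
    (fun p q => reFin n (by norm_num) (g42view p q))
    (fun s ih p q =>
      reFin n (by rw [pow_succ, pow_succ]; ring)
        ((blockEquiv n 4 (2 ^ (s + 1)))
          (g42view p.1
            ((blockEquiv n 2 (2 ^ (s + 1))).symm
              (reFin n (by rw [pow_succ]; ring) (ih p.2 q))))))
    s

/-- Tensor power over arbitrary index types, as a submodule. -/
def tpS {F ι J : Type} [Field F] [DecidableEq J] (D : Submodule F (ι → F)) :
    Submodule F ((J → ι) → F) where
  carrier := {r | ∀ (b : J) (x : J → ι), (fun i => r (Function.update x b i)) ∈ D}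
  add_mem' := fun ha hb b x => D.add_mem (ha b x) (hb b x)
  zero_mem' := fun _ _ => D.zero_mem
  smul_mem' := fun c _ ha b x => D.smul_mem c (ha b x)

set_option linter.unusedSectionVars false

section core
variable {F ι J : Type} [Field F] [DecidableEq F] [Fintype ι] [DecidableEq ι]
  [Fintype J] [DecidableEq J]

lemma dist_power (D : Submodule F (ι → F)) (d : ℕ)
    (hd : ∀ w ∈ D, w ≠ 0 → d ≤ hammingNorm w) (f : (J → ι) → F) (S : Finset J)
    (hf : ∀ b ∈ S, ∀ x : J → ι, (fun i => f (Function.update x b i)) ∈ D) :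
    ∀ x0 : J → ι, f x0 ≠ 0 →
      d ^ S.card ≤ (Finset.univ.filter (fun x : J → ι => (∀ b, b ∉ S → x b = x0 b) ∧ f x ≠ 0)).card := by
  induction S using Finset.induction_on with
  | empty =>
    intro x0 h0
    simp only [Finset.card_empty, pow_zero]
    apply Finset.card_pos.2
    exact ⟨x0, by simp [h0]⟩
  | insert b S hb ih =>
    intro x0 h0
    have ih' := ih (fun b' hb' => hf b' (Finset.mem_insert_of_mem hb'))
    have hline := hd _ (hf b (Finset.mem_insert_self _ _) x0) (by
      intro h
      have := congrFun h (x0 b)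
      simp at this
      exact h0 this)
    rw [hammingNorm] at hline
    rw [Finset.card_insert_of_notMem hb, pow_succ']
    set T := Finset.univ.filter (fun i => f (Function.update x0 b i) ≠ 0) with hT
    have hmaps : ∀ i ∈ T, d ^ S.card ≤ ((Finset.univ.filter (fun x : J → ι => (∀ b', b' ∉ insert b S → x b' = x0 b') ∧ f x ≠ 0)).filter (fun x => x b = i)).card := by
      intro i hi
      have hi' : f (Function.update x0 b i) ≠ 0 := by simpa [hT] using hi
      refine (ih' _ hi').trans (Finset.card_le_card ?_)
      intro x hx
      simp only [Finset.mem_filter, Finset.mem_univ, true_and] at hx ⊢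
      refine ⟨⟨fun b' hb' => ?_, hx.2⟩, ?_⟩
      · have hb'' : b' ≠ b ∧ b' ∉ S := by simpa [not_or] using hb'
        rw [hx.1 b' hb''.2, Function.update_of_ne hb''.1]
      · rw [hx.1 b hb]; simp
    calc d * d ^ S.card ≤ T.card * d ^ S.card := Nat.mul_le_mul_right _ hline
      _ = ∑ i ∈ T, d ^ S.card := by simp
      _ ≤ ∑ i ∈ T, _ := Finset.sum_le_sum hmaps
      _ ≤ ∑ i, _ := Finset.sum_le_sum_of_subset (Finset.subset_univ T)
      _ = _ := (Finset.card_eq_sum_card_fiberwise (fun x _ => Finset.mem_coe.2 (Finset.mem_univ (x b)))).symm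

lemma bad_count (D : Submodule F (ι → F)) (d : ℕ)
    (hd : ∀ w ∈ D, w ≠ 0 → d ≤ hammingNorm w) (a b : J) (hab : a ≠ b)
    (g g' : (J → ι) → F)
    (hg : ∀ c, c ≠ a → ∀ x, (fun i => g (Function.update x c i)) ∈ D)
    (hg' : ∀ c, c ≠ b → ∀ x, (fun i => g' (Function.update x c i)) ∈ D)
    (K : ι → Finset ι) (hK : ∀ i, ∀ k ∈ K i, ∃ x : J → ι, x a = i ∧ x b = k ∧ g x ≠ g' x) :
    (Finset.univ.filter (fun i => d ≤ 2 * (K i).card)).card * d ^ (Fintype.card J - 1)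
      ≤ 2 * hammingDist g g' := by
  set P := Finset.univ.filter (fun x : J → ι => g x ≠ g' x) with hP
  have hcard : (Finset.univ \ {a, b} : Finset J).card = Fintype.card J - 2 := by
    rw [Finset.card_sdiff_of_subset (Finset.subset_univ _), Finset.card_pair hab, Finset.card_univ]
  have h2 : 2 ≤ Fintype.card J := by
    rw [← Finset.card_pair hab]; exact Finset.card_le_univ _
  have hik : ∀ i, ∀ k ∈ K i, d ^ (Fintype.card J - 2) ≤ ((P.filter (fun x => x a = i)).filter (fun x => x b = k)).card := by
    intro i k hk
    obtain ⟨x, hxa, hxb, hne⟩ := hK i k hk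
    have := dist_power D d hd (g - g') (Finset.univ \ {a, b}) (by
      intro c hc y
      have hc' : c ≠ a ∧ c ≠ b := by simpa [not_or] using hc
      exact D.sub_mem (hg c hc'.1 y) (hg' c hc'.2 y)) x (by simpa [sub_eq_zero] using hne)
    rw [hcard] at this
    refine this.trans (Finset.card_le_card ?_)
    intro y hy
    simp only [Finset.mem_filter, Finset.mem_univ, true_and, hP] at hy ⊢
    refine ⟨⟨by simpa [sub_eq_zero] using hy.2, ?_⟩, ?_⟩
    · rw [hy.1 a (by simp), hxa]
    · rw [hy.1 b (by simp), hxb]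
  have hi : ∀ i, (K i).card * d ^ (Fintype.card J - 2) ≤ (P.filter (fun x => x a = i)).card := by
    intro i
    calc (K i).card * d ^ (Fintype.card J - 2) = ∑ k ∈ K i, d ^ (Fintype.card J - 2) := by simp
      _ ≤ ∑ k ∈ K i, _ := Finset.sum_le_sum (hik i)
      _ ≤ ∑ k, _ := Finset.sum_le_sum_of_subset (Finset.subset_univ _)
      _ = _ := (Finset.card_eq_sum_card_fiberwise (fun x _ => Finset.mem_coe.2 (Finset.mem_univ (x b)))).symm
  set B := Finset.univ.filter (fun i => d ≤ 2 * (K i).card) with hB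
  have hpow : d ^ (Fintype.card J - 1) = d * d ^ (Fintype.card J - 2) := by
    rw [← pow_succ']; congr 1; omega
  calc B.card * d ^ (Fintype.card J - 1) = ∑ i ∈ B, d ^ (Fintype.card J - 1) := by simp
    _ ≤ ∑ i ∈ B, 2 * (P.filter (fun x => x a = i)).card := by
        apply Finset.sum_le_sum
        intro i hiB
        have hiB' : d ≤ 2 * (K i).card := by simpa [hB] using hiB
        rw [hpow]
        calc d * d ^ (Fintype.card J - 2) ≤ (2 * (K i).card) * d ^ (Fintype.card J - 2) :=
              Nat.mul_le_mul_right _ hiB'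
          _ = 2 * ((K i).card * d ^ (Fintype.card J - 2)) := by ring
          _ ≤ _ := Nat.mul_le_mul_left _ (hi i)
    _ ≤ ∑ i, 2 * (P.filter (fun x => x a = i)).card := Finset.sum_le_sum_of_subset (Finset.subset_univ _)
    _ = 2 * P.card := by
        rw [← Finset.mul_sum]
        congr 1
        exact (Finset.card_eq_sum_card_fiberwise (fun x _ => Finset.mem_coe.2 (Finset.mem_univ (x a)))).symm
    _ = _ := rfl

lemma zero_of_few (D : Submodule F (ι → F)) (d : ℕ)
    (hd : ∀ w ∈ D, w ≠ 0 → d ≤ hammingNorm w) (B : Finset ι) (hB : B.card < d)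
    (w : ι → F) (hw : w ∈ D) (h : ∀ i, i ∉ B → w i = 0) : w = 0 := by
  by_contra hne
  have h1 := hd w hw hne
  have h2 : hammingNorm w ≤ B.card := by
    apply Finset.card_le_card
    intro i hi
    by_contra hiB
    simp [h i hiB] at hi
  omega

lemma exists_ext (D : Submodule F (ι → F)) (d : ℕ)
    (hd : ∀ w ∈ D, w ≠ 0 → d ≤ hammingNorm w) (B : Finset ι) (hB : B.card < d) :
    ∃ L : (ι → F) →ₗ[F] (ι → F), (∀ w, L w ∈ D) ∧ (∀ w ∈ D, L w = w) ∧
      (∀ w w' : ι → F, (∀ i, i ∉ B → w i = w' i) → L w = L w') := by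
  let R : (ι → F) →ₗ[F] ({i // i ∉ B} → F) := LinearMap.funLeft F F Subtype.val
  have hker : LinearMap.ker (R.comp D.subtype) = ⊥ := by
    rw [LinearMap.ker_eq_bot']
    intro w hw
    apply Subtype.ext
    apply zero_of_few D d hd B hB _ w.2
    intro i hi
    exact congrFun hw ⟨i, hi⟩
  obtain ⟨l, hl⟩ := LinearMap.exists_leftInverse_of_injective _ hker
  refine ⟨D.subtype.comp (l.comp R), fun w => (l (R w)).2, ?_, ?_⟩
  · intro w hw
    have := LinearMap.congr_fun hl ⟨w, hw⟩
    exact congrArg Subtype.val this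
  · intro w w' h
    have : R w = R w' := by
      funext i
      exact h i.1 i.2
    simp [this]

lemma extension (D : Submodule F (ι → F)) (d : ℕ)
    (hd : ∀ w ∈ D, w ≠ 0 → d ≤ hammingNorm w) (a b : J) (hab : a ≠ b)
    (g g' : (J → ι) → F)
    (hg : ∀ c, c ≠ a → ∀ x, (fun i => g (Function.update x c i)) ∈ D)
    (hg' : ∀ c, c ≠ b → ∀ x, (fun i => g' (Function.update x c i)) ∈ D)
    (A B : Finset ι) (hA : A.card < d) (hB : B.card < d)
    (hagree : ∀ x : J → ι, x a ∉ A → x b ∉ B → g x = g' x) :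
    ∃ c ∈ (tpS D : Submodule F ((J → ι) → F)), ∀ x, x a ∉ A → c x = g x := by
  obtain ⟨L, hLD, hLid, hLdep⟩ := exists_ext D d hd A hA
  let c : (J → ι) → F := fun x => L (fun i => g (Function.update x a i)) (x a)
  have hc : c ∈ (tpS D : Submodule F ((J → ι) → F)) := by
    intro e x
    by_cases hea : e = a
    · subst hea
      have : (fun i => c (Function.update x e i)) = L (fun i => g (Function.update x e i)) := by
        funext i
        simp [c]
      rw [this]; exact hLD _
    · have : (fun i => c (Function.update x e i)) =
          ∑ i', (L (Pi.single i' 1) (x a)) •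
            (fun i => g (Function.update (Function.update x a i') e i)) := by
        funext i
        have h1 := congrFun (LinearMap.pi_apply_eq_sum_univ L
          (fun i' => g (Function.update (Function.update x e i) a i'))) (x a)
        simp only [c, Function.update_of_ne (Ne.symm hea)]
        rw [h1]
        simp only [Finset.sum_apply, Pi.smul_apply, smul_eq_mul]
        apply Finset.sum_congr rfl
        intro i' _
        rw [Function.update_comm hea, mul_comm]
        have hps : (fun j => if i' = j then (1 : F) else 0) = Pi.single i' 1 := by
          funext j
          simp [Pi.single_apply, eq_comm]
        rw [hps]
      rw [this]
      exact D.sum_mem fun i' _ => D.smul_mem _ (hg e hea _)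
  have hc1 : ∀ x : J → ι, x b ∉ B → c x = g' x := by
    intro x hx
    have h1 : L (fun i => g (Function.update x a i)) = L (fun i => g' (Function.update x a i)) := by
      apply hLdep
      intro i hi
      apply hagree
      · simpa using hi
      · rwa [Function.update_of_ne hab.symm]
    simp only [c]
    rw [h1, hLid _ (hg' a hab x)]
    simp
  refine ⟨c, hc, fun x hx => ?_⟩
  have hz := zero_of_few D d hd B hB
    (fun i => c (Function.update x b i) - g (Function.update x b i))
    (D.sub_mem (hc b x) (hg b hab.symm x)) (by
      intro i hi
      rw [sub_eq_zero, hc1 _ (by simpa using hi)]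
      symm
      apply hagree
      · rwa [Function.update_of_ne hab]
      · simpa using hi)
  have := congrFun hz (x b)
  simpa [sub_eq_zero] using this

lemma good_agree (D : Submodule F (ι → F)) (d : ℕ)
    (hd : ∀ w ∈ D, w ≠ 0 → d ≤ hammingNorm w) (a b e : J) (hea : e ≠ a) (heb : e ≠ b)
    (g g' g'' : (J → ι) → F)
    (hg : ∀ c, c ≠ a → ∀ x, (fun i => g (Function.update x c i)) ∈ D)
    (hg' : ∀ c, c ≠ b → ∀ x, (fun i => g' (Function.update x c i)) ∈ D)
    (K K' : ι → Finset ι)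
    (hK : ∀ i k, (∃ x : J → ι, x a = i ∧ x e = k ∧ g x ≠ g'' x) → k ∈ K i)
    (hK' : ∀ i k, (∃ x : J → ι, x b = i ∧ x e = k ∧ g' x ≠ g'' x) → k ∈ K' i)
    (x : J → ι) (hx : ¬ d ≤ 2 * (K (x a)).card) (hx' : ¬ d ≤ 2 * (K' (x b)).card) :
    g x = g' x := by
  by_contra hne
  have h1 := hd _ (D.sub_mem (hg e hea x) (hg' e heb x)) (by
    intro h
    have := congrFun h (x e)
    simp [sub_eq_zero] at this
    exact hne this)
  have h2 : hammingNorm ((fun i => g (Function.update x e i)) - (fun i => g' (Function.update x e i)))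
      ≤ (K (x a) ∪ K' (x b)).card := by
    apply Finset.card_le_card
    intro k hk
    have hk' : g (Function.update x e k) ≠ g' (Function.update x e k) := by
      simpa [sub_eq_zero] using hk
    rw [Finset.mem_union]
    by_cases h : g (Function.update x e k) = g'' (Function.update x e k)
    · right
      apply hK'
      refine ⟨Function.update x e k, by rw [Function.update_of_ne heb.symm], by simp, ?_⟩
      rw [← h]; exact hk'.symm
    · left
      apply hK
      exact ⟨Function.update x e k, by rw [Function.update_of_ne hea.symm], by simp, h⟩
  have h3 := Finset.card_union_le (K (x a)) (K' (x b))
  omega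

lemma hyper_count (a : J) (A : Finset ι) :
    (Finset.univ.filter (fun x : J → ι => x a ∈ A)).card
      = A.card * Fintype.card ι ^ (Fintype.card J - 1) := by
  have : (Finset.univ.filter (fun x : J → ι => x a ∈ A))
      = Fintype.piFinset (fun j => if j = a then A else Finset.univ) := by
    ext x
    simp only [Finset.mem_filter, Finset.mem_univ, true_and, Fintype.mem_piFinset]
    constructor
    · intro h j
      by_cases hj : j = a
      · subst hj; simpa using h
      · simp [hj]
    · intro h
      simpa using h a
  rw [this, Fintype.card_piFinset, ← Finset.mul_prod_erase Finset.univ _ (Finset.mem_univ a)]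
  simp only [if_true]
  congr 1
  rw [Finset.prod_congr rfl (g := fun _ => Fintype.card ι)]
  · simp [Finset.card_erase_of_mem]
  · intro j hj
    simp [(Finset.mem_erase.1 hj).1]

lemma main_comb (D : Submodule F (ι → F)) (d : ℕ)
    (hd : ∀ w ∈ D, w ≠ 0 → d ≤ hammingNorm w) (hd0 : 0 < d) (hdN : d ≤ Fintype.card ι)
    (hN : Fintype.card ι ^ Fintype.card J ≤ 2 * d ^ Fintype.card J)
    (b0 b1 b2 : J) (h01 : b0 ≠ b1) (h02 : b0 ≠ b2) (h12 : b1 ≠ b2)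
    (r g0 g1 g2 : (J → ι) → F)
    (hg0 : ∀ c, c ≠ b0 → ∀ x, (fun i => g0 (Function.update x c i)) ∈ D)
    (hg1 : ∀ c, c ≠ b1 → ∀ x, (fun i => g1 (Function.update x c i)) ∈ D)
    (hg2 : ∀ c, c ≠ b2 → ∀ x, (fun i => g2 (Function.update x c i)) ∈ D) :
    ∃ c ∈ (tpS D : Submodule F ((J → ι) → F)),
      hammingDist r c ≤ 5 * (hammingDist r g0 + hammingDist r g1 + hammingDist r g2) := by
  classical
  set S := hammingDist r g0 + hammingDist r g1 + hammingDist r g2 with hS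
  set N := Fintype.card ι with hNdef
  obtain ⟨m, hm⟩ : ∃ m, Fintype.card J = m + 1 :=
    ⟨Fintype.card J - 1, by have := Fintype.card_pos_iff.2 ⟨b0⟩; omega⟩
  by_cases hbig : d ^ Fintype.card J ≤ 2 * S
  · refine ⟨0, Submodule.zero_mem _, ?_⟩
    have : hammingDist r 0 ≤ Fintype.card (J → ι) := hammingDist_le_card_fintype
    rw [Fintype.card_fun, ← hNdef] at this
    omega
  let K0 : ι → Finset ι := fun i => Finset.univ.filter (fun k => ∃ x : J → ι, x b0 = i ∧ x b2 = k ∧ g0 x ≠ g2 x)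
  let K1 : ι → Finset ι := fun i => Finset.univ.filter (fun k => ∃ x : J → ι, x b1 = i ∧ x b2 = k ∧ g1 x ≠ g2 x)
  have hA := bad_count D d hd b0 b2 h02 g0 g2 hg0 hg2 K0 (fun i k hk => by simpa [K0] using hk)
  have hB := bad_count D d hd b1 b2 h12 g1 g2 hg1 hg2 K1 (fun i k hk => by simpa [K1] using hk)
  set A := Finset.univ.filter (fun i => d ≤ 2 * (K0 i).card) with hAdef
  set B := Finset.univ.filter (fun i => d ≤ 2 * (K1 i).card) with hBdef
  have t02 : hammingDist g0 g2 ≤ hammingDist r g0 + hammingDist r g2 := by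
    rw [hammingDist_comm r g0]; exact hammingDist_triangle _ _ _
  have t12 : hammingDist g1 g2 ≤ hammingDist r g1 + hammingDist r g2 := by
    rw [hammingDist_comm r g1]; exact hammingDist_triangle _ _ _
  rw [hm] at hA hB hbig hN
  simp only [Nat.add_sub_cancel] at hA hB
  have hcardA : A.card < d := by
    by_contra h
    have : d ^ (m+1) ≤ A.card * d ^ m := by rw [pow_succ']; exact Nat.mul_le_mul_right _ (by omega)
    omega
  have hcardB : B.card < d := by
    by_contra h
    have : d ^ (m+1) ≤ B.card * d ^ m := by rw [pow_succ']; exact Nat.mul_le_mul_right _ (by omega)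
    omega
  have hNm : N ^ m ≤ 2 * d ^ m := by
    have : N ^ m * d ≤ (2 * d ^ m) * d := by
      calc N ^ m * d ≤ N ^ m * N := Nat.mul_le_mul_left _ hdN
        _ = N ^ (m+1) := (pow_succ _ _).symm
        _ ≤ 2 * d ^ (m+1) := hN
        _ = _ := by ring
    exact Nat.le_of_mul_le_mul_right this hd0
  obtain ⟨c, hc, hcg⟩ := extension D d hd b0 b1 h01 g0 g1 hg0 hg1 A B hcardA hcardB (by
    intro x hxa hxb
    exact good_agree D d hd b0 b1 b2 h02.symm h12.symm g0 g1 g2 hg0 hg1 K0 K1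
      (fun i k h => by simpa [K0] using h) (fun i k h => by simpa [K1] using h) x
      (by simpa [hAdef] using hxa) (by simpa [hBdef] using hxb))
  refine ⟨c, hc, ?_⟩
  have hsub : hammingDist r c ≤ hammingDist r g0 + A.card * N ^ m := by
    have hh := hyper_count b0 A
    rw [hm, Nat.add_sub_cancel] at hh
    rw [← hh]
    refine le_trans (Finset.card_le_card ?_) (Finset.card_union_le _ _)
    intro x hx
    simp only [Finset.mem_union, Finset.mem_filter, Finset.mem_univ, true_and] at hx ⊢
    by_cases hxa : x b0 ∈ A
    · right; exact hxa
    · left; rwa [← hcg x hxa]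
  have : A.card * N ^ m ≤ 2 * (A.card * d ^ m) := by
    calc A.card * N ^ m ≤ A.card * (2 * d ^ m) := Nat.mul_le_mul_left _ hNm
      _ = _ := by ring
  omega

end core

section dist
variable {F ι κ J : Type} [Field F] [DecidableEq F] [Fintype F] [Fintype ι] [DecidableEq ι]
  [Fintype κ] [Fintype J] [DecidableEq J]

lemma dtc_exists (C : Submodule F (ι → F)) (r : ι → F) :
    ∃ c ∈ C, distToCode (C : Set (ι → F)) r = relHammingDist r c := by
  have h : (relHammingDist r '' (C : Set (ι → F))).Nonempty := ⟨_, 0, C.zero_mem, rfl⟩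
  obtain ⟨c, hc, he⟩ := h.csInf_mem (Set.toFinite _)
  exact ⟨c, hc, he.symm⟩

lemma dtc_le (C : Submodule F (ι → F)) (r c : ι → F) (hc : c ∈ C) :
    distToCode (C : Set (ι → F)) r ≤ relHammingDist r c :=
  csInf_le (Set.toFinite _).bddBelow ⟨c, hc, rfl⟩

lemma dtc_zero (C : Submodule F (ι → F)) (r : ι → F) (hr : r ∈ C) :
    distToCode (C : Set (ι → F)) r = 0 := by
  apply le_antisymm
  · refine (dtc_le C r r hr).trans ?_
    simp [relHammingDist]
  · obtain ⟨c, -, h⟩ := dtc_exists C r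
    rw [h, relHammingDist]; positivity

lemma mem_of_dtc (C : Submodule F (ι → F)) (r : ι → F)
    (h : distToCode (C : Set (ι → F)) r ≤ 0) : r ∈ C := by
  obtain ⟨c, hc, he⟩ := dtc_exists C r
  rw [he, relHammingDist] at h
  by_cases hne : hammingDist r c = 0
  · rw [hammingDist_eq_zero] at hne
    rwa [hne]
  · exfalso
    have h1 : 0 < hammingDist r c := Nat.pos_of_ne_zero hne
    have h2 : hammingDist r c ≤ Fintype.card ι := hammingDist_le_card_fintype
    have h3 : 0 < Fintype.card ι := by omega
    have : (0 : ℝ) < (hammingDist r c : ℝ) / Fintype.card ι := by positivity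
    linarith

lemma relHam_equiv (e : ι ≃ κ) (r c : κ → F) :
    relHammingDist (fun i => r (e i)) (fun i => c (e i)) = relHammingDist r c := by
  unfold relHammingDist
  rw [Fintype.card_congr e]
  congr 2
  unfold hammingDist
  apply Finset.card_bij (fun i _ => e i)
  · intro i hi; simpa using hi
  · intro i _ j _ h; exact e.injective h
  · intro k hk; exact ⟨e.symm k, by simpa using hk, by simp⟩

lemma dtc_equiv (e : ι ≃ κ) (C : Set (κ → F)) (C' : Set (ι → F))
    (h : ∀ r : κ → F, r ∈ C ↔ (fun i => r (e i)) ∈ C') (r : κ → F) :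
    distToCode C r = distToCode C' (fun i => r (e i)) := by
  unfold distToCode
  congr 1
  ext v
  constructor
  · rintro ⟨c, hc, rfl⟩
    exact ⟨_, (h c).1 hc, relHam_equiv e r c⟩
  · rintro ⟨c, hc, rfl⟩
    have hc' : (fun i => (fun k => c (e.symm k)) (e i)) = c := by funext i; simp
    refine ⟨fun k => c (e.symm k), (h _).2 (by rwa [hc']), ?_⟩
    rw [← relHam_equiv e, hc']

lemma insertNth_upd {k : ℕ} (b : Fin (k + 1)) (i j : ι) (y : Fin k → ι) (e : Fin k) :
    (b.insertNth i (Function.update y e j) : Fin (k + 1) → ι)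
      = Function.update (b.insertNth i y) (b.succAbove e) j := by
  funext c
  refine Fin.succAboveCases b ?_ (fun c' => ?_) c
  · simp [Function.update_of_ne (Fin.succAbove_ne b e).symm]
  · by_cases h : c' = e
    · subst h; simp
    · simp [Function.update_of_ne h, Function.update_of_ne (fun h' => h (Fin.succAbove_right_injective h'))]

lemma removeNth_upd {k : ℕ} (b : Fin (k + 1)) (j : ι) (x : Fin (k + 1) → ι) (e : Fin k) :
    (b.removeNth (Function.update x (b.succAbove e) j) : Fin k → ι)
      = Function.update (b.removeNth x) e j := by
  funext c
  by_cases h : c = e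
  · subst h; simp [Fin.removeNth]
  · simp [Fin.removeNth, Function.update_of_ne h, Function.update_of_ne (fun h' => h (Fin.succAbove_right_injective h'))]

lemma slice_mem {k : ℕ} (D : Submodule F (ι → F)) (r : (Fin (k + 1) → ι) → F)
    (hr : r ∈ (tpS D : Submodule F ((Fin (k + 1) → ι) → F))) (b : Fin (k + 1)) (i : ι) :
    (fun y => r (b.insertNth i y)) ∈ (tpS D : Submodule F ((Fin k → ι) → F)) := by
  intro e y
  have := hr (b.succAbove e) (b.insertNth i y)
  simpa only [insertNth_upd] using this

lemma ham_slices {k : ℕ} (b : Fin (k + 1)) (r g : (Fin (k + 1) → ι) → F) :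
    hammingDist r g = ∑ i, hammingDist (fun y => r (b.insertNth i y)) (fun y => g (b.insertNth i y)) := by
  unfold hammingDist
  rw [Finset.card_eq_sum_card_fiberwise (f := fun x => x b) (t := Finset.univ)
    (fun x _ => Finset.mem_coe.2 (Finset.mem_univ (x b)))]
  apply Finset.sum_congr rfl
  intro i _
  symm
  apply Finset.card_bij (fun (y : Fin k → ι) _ => (b.insertNth i y : Fin (k + 1) → ι))
  · intro y hy
    simpa using hy
  · intro y _ y' _ h
    exact Fin.insertNth_right_injective (α := fun _ => ι) i h
  · intro x hx
    simp only [Finset.mem_filter, Finset.mem_univ, true_and] at hx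
    have hx' : (b.insertNth i (b.removeNth x) : Fin (k + 1) → ι) = x := by
      rw [← hx.2]; exact Fin.insertNth_self_removeNth b x
    refine ⟨b.removeNth x, ?_, hx'⟩
    simp only [Finset.mem_filter, Finset.mem_univ, true_and]
    rw [hx']; exact hx.1

lemma product_step {k : ℕ} (D : Submodule F (ι → F)) (d : ℕ)
    (hd : ∀ w ∈ D, w ≠ 0 → d ≤ hammingNorm w) (hd0 : 0 < d) (hdN : d ≤ Fintype.card ι)
    (hN : Fintype.card ι ^ (k + 3) ≤ 2 * d ^ (k + 3)) (r : (Fin (k + 3) → ι) → F) :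
    (Fintype.card ι : ℝ) * distToCode ((tpS D : Submodule F ((Fin (k + 3) → ι) → F)) : Set _) r ≤
      5 * ∑ b : Fin (k + 3), ∑ i : ι,
        distToCode ((tpS D : Submodule F ((Fin (k + 2) → ι) → F)) : Set _)
          (fun y => r (b.insertNth i y)) := by
  choose cw hcw hcd using fun (b : Fin (k + 3)) (i : ι) =>
    dtc_exists (tpS D : Submodule F ((Fin (k + 2) → ι) → F)) (fun y => r (b.insertNth i y))
  let g : Fin (k + 3) → (Fin (k + 3) → ι) → F := fun b x => cw b (x b) (b.removeNth x)
  have hg : ∀ b c, c ≠ b → ∀ x, (fun i => g b (Function.update x c i)) ∈ D := by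
    intro b c hc x
    obtain ⟨e, rfl⟩ := Fin.exists_succAbove_eq hc
    have := hcw b (x b) e (b.removeNth x)
    simpa only [g, removeNth_upd, Function.update_of_ne hc.symm] using this
  have hgd : ∀ b, hammingDist r (g b) = ∑ i, hammingDist (fun y => r (b.insertNth i y)) (cw b i) := by
    intro b
    rw [ham_slices b]
    apply Finset.sum_congr rfl
    intro i _
    congr 1
    funext y
    simp [g]
  have h01 : (⟨0, by omega⟩ : Fin (k + 3)) ≠ ⟨1, by omega⟩ := by simp [Fin.ext_iff]
  have h02 : (⟨0, by omega⟩ : Fin (k + 3)) ≠ ⟨2, by omega⟩ := by simp [Fin.ext_iff]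
  have h12 : (⟨1, by omega⟩ : Fin (k + 3)) ≠ ⟨2, by omega⟩ := by simp [Fin.ext_iff]
  obtain ⟨c, hc, hle⟩ := main_comb D d hd hd0 hdN (by simpa using hN) _ _ _ h01 h02 h12 r
    (g _) (g _) (g _) (hg _) (hg _) (hg _)
  have hsum : hammingDist r (g ⟨0, by omega⟩) + hammingDist r (g ⟨1, by omega⟩)
      + hammingDist r (g ⟨2, by omega⟩) ≤ ∑ b, hammingDist r (g b) := by
    have := Finset.sum_le_sum_of_subset (f := fun b => hammingDist r (g b))
      (Finset.subset_univ ({⟨0, by omega⟩, ⟨1, by omega⟩, ⟨2, by omega⟩} : Finset (Fin (k + 3))))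
    rw [Finset.sum_insert (by simp [Fin.ext_iff]), Finset.sum_pair h12] at this
    omega
  have hfin : hammingDist r c ≤ 5 * ∑ b, ∑ i, hammingDist (fun y => r (b.insertNth i y)) (cw b i) := by
    simp only [← hgd]
    omega
  have hN0 : (0 : ℝ) < Fintype.card ι := by exact_mod_cast (by omega : 0 < Fintype.card ι)
  have h1 := dtc_le _ r c hc
  have hfin' : (hammingDist r c : ℝ) ≤
      5 * ∑ b, ∑ i, (hammingDist (fun y => r (b.insertNth i y)) (cw b i) : ℝ) := by
    exact_mod_cast hfin
  simp only [hcd]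
  simp only [relHammingDist] at h1 ⊢
  simp only [Fintype.card_fun, Fintype.card_fin, Nat.cast_pow] at h1 ⊢
  simp only [← Finset.sum_div]
  calc _ ≤ (Fintype.card ι : ℝ) * ((hammingDist r c : ℝ) / (Fintype.card ι : ℝ) ^ (k + 3)) := by gcongr
    _ = (hammingDist r c : ℝ) / (Fintype.card ι : ℝ) ^ (k + 2) := by
        rw [pow_succ (Fintype.card ι : ℝ) (k + 2)]; field_simp
    _ ≤ (5 * ∑ b, ∑ i, (hammingDist (fun y => r (b.insertNth i y)) (cw b i) : ℝ))
          / (Fintype.card ι : ℝ) ^ (k + 2) := by gcongr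
    _ = _ := by rw [mul_div_assoc]

lemma pow_mono_aux (n d a b : ℕ) (hd0 : 0 < d) (hdn : d ≤ n) (hab : a ≤ b)
    (h : n ^ b ≤ 2 * d ^ b) : n ^ a ≤ 2 * d ^ a := by
  obtain ⟨c, rfl⟩ := Nat.exists_eq_add_of_le hab
  have : n ^ a * d ^ c ≤ (2 * d ^ a) * d ^ c := by
    calc n ^ a * d ^ c ≤ n ^ a * n ^ c := Nat.mul_le_mul_left _ (Nat.pow_le_pow_left hdn c)
      _ = n ^ (a + c) := (pow_add _ _ _).symm
      _ ≤ _ := h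
      _ = _ := by ring
  exact Nat.le_of_mul_le_mul_right this (by positivity)

lemma g42_step (D : Submodule F (ι → F)) (d : ℕ)
    (hd : ∀ w ∈ D, w ≠ 0 → d ≤ hammingNorm w) (hd0 : 0 < d) (hdN : d ≤ Fintype.card ι)
    (hN : Fintype.card ι ^ 4 ≤ 2 * d ^ 4) (r : (Fin 4 → ι) → F) :
    distToCode ((tpS D : Submodule F ((Fin 4 → ι) → F)) : Set _) r ≤
      300 * ((∑ p : (Fin 4 × ι) × (Fin 3 × ι),
        distToCode ((tpS D : Submodule F ((Fin 2 → ι) → F)) : Set _)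
          (fun q => r (g42view p q))) / Fintype.card ((Fin 4 × ι) × (Fin 3 × ι))) := by
  have hN0 : (0 : ℝ) < Fintype.card ι := by exact_mod_cast (by omega : 0 < Fintype.card ι)
  have h4 := product_step (k := 1) D d hd hd0 hdN hN r
  have h3 := fun (b : Fin 4) (i : ι) => product_step (k := 0) D d hd hd0 hdN
    (pow_mono_aux _ _ _ _ hd0 hdN (by norm_num) hN) (fun y => r (b.insertNth i y))
  simp only [Fintype.sum_prod_type, Fintype.card_prod, Fintype.card_fin, g42view]
  set S : ℝ := ∑ b : Fin 4, ∑ i : ι, ∑ b' : Fin 3, ∑ i' : ι,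
    distToCode ((tpS D : Submodule F ((Fin 2 → ι) → F)) : Set _)
      (fun q => r (b.insertNth i (b'.insertNth i' q))) with hS
  have h5 : (Fintype.card ι : ℝ) * ∑ b : Fin 4, ∑ i : ι,
      distToCode ((tpS D : Submodule F ((Fin 3 → ι) → F)) : Set _) (fun y => r (b.insertNth i y))
      ≤ 5 * S := by
    simp only [hS, Finset.mul_sum] at h3 ⊢
    exact Finset.sum_le_sum fun b _ => Finset.sum_le_sum fun i _ => h3 b i
  set N : ℝ := (Fintype.card ι : ℝ) with hNr
  have h6 : N * (N * distToCode ((tpS D : Submodule F ((Fin 4 → ι) → F)) : Set _) r) ≤ 25 * S := by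
    have h7 := mul_le_mul_of_nonneg_left h4 hN0.le
    rw [mul_left_comm N 5] at h7
    refine h7.trans ?_
    have h8 := mul_le_mul_of_nonneg_left h5 (show (0 : ℝ) ≤ 5 by norm_num)
    refine h8.trans (le_of_eq ?_)
    ring
  push_cast
  rw [← hNr, ← mul_div_assoc, le_div_iff₀ (by positivity)]
  nlinarith [h6]

end dist

section recursion
variable {F : Type} [Field F] [DecidableEq F] [Fintype F] {n : ℕ}

lemma reFin_mem (C : Set (Fin n → F)) {a b : ℕ} (h : a = b) (r : (Fin b → Fin n) → F) :
    r ∈ tensorPow C b ↔ (fun x => r (reFin n h x)) ∈ tensorPow C a := by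
  subst h
  rfl

lemma block_upd (a b : ℕ) (y : Fin a → Fin b → Fin n) (β : Fin a) (e : Fin b) (z : Fin b → Fin n)
    (i : Fin n) :
    blockEquiv n a b (Function.update y β (Function.update z e i))
      = Function.update (blockEquiv n a b (Function.update y β z)) (finProdFinEquiv (β, e)) i := by
  have key : ∀ (w : Fin a → Fin b → Fin n) (p : Fin a × Fin b),
      blockEquiv n a b w (finProdFinEquiv p) = w p.1 p.2 := by
    intro w p
    simp [blockEquiv, Equiv.arrowCongr, Function.uncurry]
  funext k
  obtain ⟨p, rfl⟩ := finProdFinEquiv.surjective k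
  by_cases hp : p = (β, e)
  · subst hp
    rw [key]; simp
  · rw [key, Function.update_of_ne (fun h => hp (finProdFinEquiv.injective h)), key]
    by_cases h1 : p.1 = β
    · have h2 : p.2 ≠ e := fun h2 => hp (Prod.ext h1 h2)
      rw [h1]; simp [h2]
    · simp [h1]

lemma block_mem (C : Submodule F (Fin n → F)) (a b : ℕ) (r : (Fin (a * b) → Fin n) → F) :
    r ∈ tensorPow (C : Set (Fin n → F)) (a * b) ↔
      (fun y => r (blockEquiv n a b y)) ∈
        (tpS (tpS C : Submodule F ((Fin b → Fin n) → F)) :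
          Submodule F ((Fin a → Fin b → Fin n) → F)) := by
  constructor
  · intro h β y e z
    have := h (finProdFinEquiv (β, e)) (blockEquiv n a b (Function.update y β z))
    simp only [← block_upd] at this
    exact this
  · intro h k x
    obtain ⟨⟨β, e⟩, rfl⟩ := finProdFinEquiv.surjective k
    obtain ⟨y, rfl⟩ := (blockEquiv n a b).surjective x
    have := h β y e (y β)
    simp only [block_upd, Function.update_eq_self] at this
    exact this

lemma rob (C : Submodule F (Fin n → F)) (d : ℕ)
    (hd : ∀ w ∈ C, w ≠ 0 → d ≤ hammingNorm w) (hd0 : 0 < d) (hdn : d ≤ n) (s : ℕ) :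
    n ^ (2 ^ (s + 2)) ≤ 2 * d ^ (2 ^ (s + 2)) →
    (∀ r ∈ tensorPow (C : Set (Fin n → F)) (2 ^ (s + 2)), ∀ j : Rty n s,
      (fun q => r (ellH n s j q)) ∈ tensorPow (C : Set (Fin n → F)) 2) ∧
    ∀ r : (Fin (2 ^ (s + 2)) → Fin n) → F,
      distToCode (tensorPow (C : Set (Fin n → F)) (2 ^ (s + 2))) r ≤
        300 ^ (s + 1) * ((∑ j : Rty n s,
            distToCode (tensorPow (C : Set (Fin n → F)) 2) (fun q => r (ellH n s j q))) /
            (Fintype.card (Rty n s))) := by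
  induction s with
  | zero =>
    intro hN
    refine ⟨fun r hr j => ?_, fun r => ?_⟩
    · have h1 := (reFin_mem (C : Set (Fin n → F)) (show 4 = 2 ^ (0 + 2) by norm_num) r).1 hr
      exact slice_mem C _ (slice_mem C _ h1 j.1.1 j.1.2) j.2.1 j.2.2
    · have h := g42_step C d hd hd0 (by simpa using hdn) (by simpa using hN)
        (fun x => r (reFin n (show 4 = 2 ^ (0 + 2) by norm_num) x))
      have he := dtc_equiv (reFin n (show 4 = 2 ^ (0 + 2) by norm_num))
        (tensorPow (C : Set (Fin n → F)) (2 ^ (0 + 2))) (tensorPow (C : Set (Fin n → F)) 4)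
        (reFin_mem _ _) r
      rw [he]
      have h300 : (300 : ℝ) ^ (0 + 1) = 300 := by norm_num
      rw [h300]
      exact h
  | succ s ih =>
    intro hN
    have hN' : n ^ (2 ^ (s + 2)) ≤ 2 * d ^ (2 ^ (s + 2)) :=
      pow_mono_aux n d _ _ hd0 hdn (Nat.pow_le_pow_right (by norm_num) (by omega)) hN
    obtain ⟨ih1, ih2⟩ := ih hN'
    have e4 : 4 * 2 ^ (s + 1) = 2 ^ (s + 1 + 2) := by rw [pow_succ, pow_succ]; ring
    have e2 : 2 ^ (s + 2) = 2 * 2 ^ (s + 1) := by rw [pow_succ]; ring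
    set D : Submodule F ((Fin (2 ^ (s + 1)) → Fin n) → F) := tpS C with hD
    let E4 : (Fin 4 → Fin (2 ^ (s + 1)) → Fin n) ≃ (Fin (2 ^ (s + 1 + 2)) → Fin n) :=
      (blockEquiv n 4 (2 ^ (s + 1))).trans (reFin n e4)
    let E2 : (Fin (2 ^ (s + 2)) → Fin n) ≃ (Fin 2 → Fin (2 ^ (s + 1)) → Fin n) :=
      (reFin n e2).trans (blockEquiv n 2 (2 ^ (s + 1))).symm
    have hell : ∀ (p : ((Fin 4 × (Fin (2 ^ (s + 1)) → Fin n)) × (Fin 3 × (Fin (2 ^ (s + 1)) → Fin n)))) (j : Rty n s) q,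
        ellH n (s + 1) (p, j) q = E4 (g42view p (E2 (ellH n s j q))) := fun p j q => rfl
    have hE4 : ∀ r : (Fin (2 ^ (s + 1 + 2)) → Fin n) → F,
        r ∈ tensorPow (C : Set (Fin n → F)) (2 ^ (s + 1 + 2)) ↔
        (fun y => r (E4 y)) ∈ ((tpS D : Submodule F ((Fin 4 → Fin (2 ^ (s + 1)) → Fin n) → F)) : Set _) := by
      intro r
      rw [reFin_mem _ e4, block_mem]
      rfl
    have hE2 : ∀ r : (Fin 2 → Fin (2 ^ (s + 1)) → Fin n) → F,
        r ∈ ((tpS D : Submodule F ((Fin 2 → Fin (2 ^ (s + 1)) → Fin n) → F)) : Set _) ↔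
        (fun y => r (E2 y)) ∈ tensorPow (C : Set (Fin n → F)) (2 ^ (s + 2)) := by
      intro r
      have h1 := block_mem C 2 (2 ^ (s + 1)) (fun x => r ((blockEquiv n 2 (2 ^ (s + 1))).symm x))
      simp only [Equiv.symm_apply_apply] at h1
      rw [reFin_mem _ e2] at h1
      exact h1.symm
    refine ⟨fun r hr j => ?_, fun r => ?_⟩
    · obtain ⟨p, j⟩ := j
      have h1 := (hE4 r).1 hr
      have h2 := slice_mem D _ (slice_mem D _ h1 p.1.1 p.1.2) p.2.1 p.2.2
      have h3 := (hE2 _).1 h2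
      exact ih1 _ h3 j
    · have hDd : ∀ w ∈ D, w ≠ 0 → d ^ (2 ^ (s + 1)) ≤ hammingNorm w := by
        intro w hw hne
        obtain ⟨x0, hx0⟩ := Function.ne_iff.1 hne
        have := dist_power C d hd w Finset.univ (fun b _ x => hw b x) x0 hx0
        simpa [hammingNorm] using this
      have h := g42_step D (d ^ (2 ^ (s + 1))) hDd (by positivity)
        (by simpa using Nat.pow_le_pow_left hdn _)
        (by
          simp only [Fintype.card_fun, Fintype.card_fin, ← pow_mul]
          rw [mul_comm, e4]; exact hN)
        (fun x => r (E4 x))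
      rw [dtc_equiv E4 _ _ hE4 r]
      refine h.trans ?_
      have hcard : Fintype.card (Rty n (s + 1)) =
        Fintype.card ((Fin 4 × (Fin (2 ^ (s + 1)) → Fin n)) × (Fin 3 × (Fin (2 ^ (s + 1)) → Fin n)))
          * Fintype.card (Rty n s) := @Fintype.card_prod _ (Rty n s) _ _
      have hsum : (∑ j : Rty n (s + 1),
            distToCode (tensorPow (C : Set (Fin n → F)) 2) (fun q => r (ellH n (s + 1) j q)))
          = ∑ p : ((Fin 4 × (Fin (2 ^ (s + 1)) → Fin n)) × (Fin 3 × (Fin (2 ^ (s + 1)) → Fin n))),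
            ∑ j : Rty n s, distToCode (tensorPow (C : Set (Fin n → F)) 2)
              (fun q => r (E4 (g42view p (E2 (ellH n s j q))))) :=
        Fintype.sum_prod_type (α₂ := Rty n s) _
      rw [hsum, hcard]
      have hp : ∀ p : ((Fin 4 × (Fin (2 ^ (s + 1)) → Fin n)) × (Fin 3 × (Fin (2 ^ (s + 1)) → Fin n))),
          distToCode ((tpS D : Submodule F ((Fin 2 → Fin (2 ^ (s + 1)) → Fin n) → F)) : Set _)
            (fun q => r (E4 (g42view p q))) ≤
          300 ^ (s + 1) * ((∑ j : Rty n s, distToCode (tensorPow (C : Set (Fin n → F)) 2)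
              (fun q => r (E4 (g42view p (E2 (ellH n s j q)))))) / Fintype.card (Rty n s)) := by
        intro p
        rw [dtc_equiv E2 _ _ hE2]
        exact ih2 _
      calc _ ≤ 300 * ((∑ p : ((Fin 4 × (Fin (2 ^ (s + 1)) → Fin n)) × (Fin 3 × (Fin (2 ^ (s + 1)) → Fin n))),
            300 ^ (s + 1) * ((∑ j : Rty n s, distToCode (tensorPow (C : Set (Fin n → F)) 2)
              (fun q => r (E4 (g42view p (E2 (ellH n s j q)))))) / Fintype.card (Rty n s))) / _) := by
              gcongr with p _
              exact hp p
        _ = _ := by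
              rw [← Finset.mul_sum, ← Finset.sum_div]
              push_cast
              rw [pow_succ (300 : ℝ) (s + 1), div_mul_eq_div_div_swap]
              ring

end recursion
/-- There is a constant `α > 0` (one may take `α = 2^{-32}`) such that for
every `t ≥ 2` (written `t = s + 2`) and every `[n,k,d]` code `C` with
`d − 1 ≥ (1 − 1/(10m))·n` for `m = 2^t`, the Tanner pair `(H^n_t, C²)` is `α^t`-robust;
in particular `C^{2^t} = TPC(H^n_t, C²)`, and the expected distance of the view of a
random test of `H^n_t` from `C²` is at least `α^t` times `δ_{C^{2^t}}(r)`. -/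
theorem recursive_tanner_robust :
    ∃ α : ℝ, 0 < α ∧ α = (2 : ℝ) ^ (-32 : ℤ) ∧
    ∀ (F : Type) [Field F] [Fintype F] [DecidableEq F]
      (n k d s : ℕ) (C : Submodule F (Fin n → F)),
      Module.finrank F C = k →
      minDist (C : Set (Fin n → F)) = d →
      ((1 - 1 / (10 * (2 : ℝ) ^ (s + 2))) * n ≤ (d : ℝ) - 1) →
      (tensorPow (C : Set (Fin n → F)) (2 ^ (s + 2)) =
        {r | ∀ j : Rty n s, (fun q => r (ellH n s j q)) ∈ tensorPow (C : Set (Fin n → F)) 2}) ∧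
      ∀ r : (Fin (2 ^ (s + 2)) → Fin n) → F,
        α ^ (s + 2) * distToCode (tensorPow (C : Set (Fin n → F)) (2 ^ (s + 2))) r ≤
          (∑ j : Rty n s,
            distToCode (tensorPow (C : Set (Fin n → F)) 2) (fun q => r (ellH n s j q))) /
            (Fintype.card (Rty n s)) := by
  refine ⟨(2 : ℝ) ^ (-32 : ℤ), by positivity, rfl, ?_⟩
  intro F _ _ _ n k d s C _ hmin hdist
  have hM : (1 : ℝ) ≤ (2 : ℝ) ^ (s + 2) := one_le_pow₀ (by norm_num)
  have hfrac : 1 / (10 * (2 : ℝ) ^ (s + 2)) ≤ 1 / 10 := by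
    apply one_div_le_one_div_of_le <;> linarith
  have hd1 : (1 : ℝ) ≤ d := by
    have : (0 : ℝ) ≤ (1 - 1 / (10 * (2 : ℝ) ^ (s + 2))) * n :=
      mul_nonneg (by linarith) (by positivity)
    linarith
  have hd0 : 0 < d := by exact_mod_cast hd1
  have hd : ∀ w ∈ C, w ≠ 0 → d ≤ hammingNorm w := by
    intro w hw hne
    rw [← hmin]
    exact Nat.sInf_le ⟨w, hw, 0, C.zero_mem, hne, hammingDist_zero_right w⟩
  have hdn : d ≤ n := by
    have hne : {e | ∃ x ∈ (C : Set (Fin n → F)), ∃ y ∈ (C : Set (Fin n → F)),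
        x ≠ y ∧ hammingDist x y = e}.Nonempty := by
      apply Nat.nonempty_of_pos_sInf
      have : 0 < minDist (C : Set (Fin n → F)) := by omega
      exact this
    obtain ⟨x, _, y, _, _, he⟩ := Nat.sInf_mem hne
    have h1 : hammingDist x y = d := by rw [he]; exact hmin
    rw [← h1]
    simpa using (hammingDist_le_card_fintype (x := x) (y := y))
  have hn0 : (0 : ℝ) < n := by exact_mod_cast (by omega : 0 < n)
  have hN : n ^ (2 ^ (s + 2)) ≤ 2 * d ^ (2 ^ (s + 2)) := by
    have hb := one_add_mul_le_pow (a := -(1 / (10 * (2 : ℝ) ^ (s + 2)))) (by linarith) (2 ^ (s + 2))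
    have hb1 : (((2 ^ (s + 2) : ℕ) : ℝ)) * -(1 / (10 * (2 : ℝ) ^ (s + 2))) = -(1 / 10) := by
      push_cast; field_simp
    rw [hb1] at hb
    have h1 : ((1 - 1 / (10 * (2 : ℝ) ^ (s + 2))) * n) ^ (2 ^ (s + 2)) ≤ (d : ℝ) ^ (2 ^ (s + 2)) := by
      apply pow_le_pow_left₀
      · exact mul_nonneg (by linarith) (by positivity)
      · linarith
    rw [mul_pow, sub_eq_add_neg] at h1
    have h2 : (0 : ℝ) ≤ (n : ℝ) ^ (2 ^ (s + 2)) := by positivity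
    have h3 := mul_le_mul_of_nonneg_right hb h2
    have h4 : (n : ℝ) ^ (2 ^ (s + 2)) ≤ 2 * (d : ℝ) ^ (2 ^ (s + 2)) := by linarith
    exact_mod_cast h4
  obtain ⟨hin, hrob⟩ := rob C d hd hd0 hdn s hN
  refine ⟨?_, fun r => ?_⟩
  · apply Set.Subset.antisymm
    · intro r hr j
      exact hin r hr j
    · intro r hr
      have h1 := hrob r
      have h0 : (∑ j : Rty n s,
          distToCode (tensorPow (C : Set (Fin n → F)) 2) (fun q => r (ellH n s j q))) = 0 :=
        Finset.sum_eq_zero (fun j _ => dtc_zero (tpS C) _ (hr j))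
      rw [h0] at h1
      rw [zero_div, mul_zero] at h1
      exact mem_of_dtc (tpS C) r h1
  · have h1 := hrob r
    set A : ℝ := (∑ j : Rty n s,
            distToCode (tensorPow (C : Set (Fin n → F)) 2) (fun q => r (ellH n s j q))) /
            (Fintype.card (Rty n s)) with hA
    have hA0 : 0 ≤ A := by
      apply div_nonneg _ (by positivity)
      apply Finset.sum_nonneg
      intro j _
      obtain ⟨c, -, h⟩ := dtc_exists (tpS C : Submodule F ((Fin 2 → Fin n) → F))
        (fun q => r (ellH n s j q))
      have h' : (0 : ℝ) ≤ relHammingDist (fun q => r (ellH n s j q)) c := by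
        rw [relHammingDist]; positivity
      exact h'.trans h.ge
    have hc : ((2 : ℝ) ^ (-32 : ℤ)) ^ (s + 2) * 300 ^ (s + 1) ≤ 1 := by
      have h300 : (300 : ℝ) ^ (s + 1) ≤ 300 ^ (s + 2) :=
        pow_le_pow_right₀ (by norm_num) (by omega)
      calc ((2 : ℝ) ^ (-32 : ℤ)) ^ (s + 2) * 300 ^ (s + 1)
          ≤ ((2 : ℝ) ^ (-32 : ℤ)) ^ (s + 2) * 300 ^ (s + 2) := by gcongr
        _ = ((2 : ℝ) ^ (-32 : ℤ) * 300) ^ (s + 2) := (mul_pow _ _ _).symm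
        _ ≤ 1 := pow_le_one₀ (by positivity) (by norm_num)
    calc _ ≤ ((2 : ℝ) ^ (-32 : ℤ)) ^ (s + 2) * (300 ^ (s + 1) * A) := by gcongr
      _ = (((2 : ℝ) ^ (-32 : ℤ)) ^ (s + 2) * 300 ^ (s + 1)) * A := by ring
      _ ≤ 1 * A := by gcongr
      _ = A := one_mul A
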